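/- arXiv:1205.4480 — 3 statements merged into one kernel-verified Lean document; each statement's English description precedes it below -/
import Mathlib

section
/- For every formal power series F ∈ ℂ⟦X⟧ and every natural number n, there exists an (n,n) Padé solution (P₀, Q₀) for F with Q₀ ≠ 0 such that every (n,n) Padé solution (P, Q) for F is of the form P = L·P₀ and Q = L·Q₀ for some polynomial L ∈ ℂ[X]. (Every solution of the Padé linear system is a polynomial multiple of the solution of minimal degree.) -/
/-- `(P, Q)` is an `(n,n)` Padé solution for the formal power series `F`:
both polynomials have degree at most `n`, and `X^(2n+1)` divides `Q·F − P`
in `ℂ⟦X⟧` (polynomials being regarded as power series). -/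
def IsPadeSolution (F : PowerSeries ℂ) (n : ℕ) (P Q : Polynomial ℂ) : Prop :=
  P.degree ≤ (n : ℕ) ∧ Q.degree ≤ (n : ℕ) ∧
    (PowerSeries.X : PowerSeries ℂ) ^ (2 * n + 1) ∣
      ((Q : PowerSeries ℂ) * F - (P : PowerSeries ℂ))

/-!
Allow numerators of degree at most `m` and denominators of degree at most `n`. A nonzero denominator
exists because `Q` has `n + 1` coefficients and only `n` coefficients of `Q * F` have to vanish. Two
solutions `(P, Q)` and `(P', Q')` satisfy `P * Q' = P' * Q`, as the difference has degree at most
`m + n` and is divisible by `X ^ (m + n + 1)`. Take `(P₀, Q₀)` with `Q₀ ≠ 0` of least degree and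
divide: `Q = L * Q₀ + R`. The cross-multiplication identity gives `(P - L * P₀) * Q₀ = P₀ * R`,
which bounds the degree of `P - L * P₀`, so `(P - L * P₀, R)` is again a solution; minimality forces
`R = 0`, and then `P = L * P₀`.
-/

section PadeApproximants

open Polynomial
open scoped PowerSeries

theorem eq_zero_of_X_pow_dvd_coe {R : Type*} [CommSemiring R] {p : R[X]} {k : ℕ}
    (hdvd : (PowerSeries.X : R⟦X⟧) ^ k ∣ p) (hdeg : p.natDegree < k) : p = 0 := by
  obtain ⟨g, hg⟩ := hdvd
  rw [← PowerSeries.trunc_coe_eq_self hdeg, hg, PowerSeries.trunc_X_pow_self_mul]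

/-- `(P, Q)` solves the linearized Padé problem of type `(m, n)` for `F`: the numerator `P` has
degree at most `m`, the denominator `Q` degree at most `n`, and `Q * F` agrees with `P` up to order
`m + n`. The trivial solution `(0, 0)` is allowed, so that solutions form a linear space. -/
structure IsPadeApproximant {R : Type*} [CommRing R] (F : R⟦X⟧) (m n : ℕ) (P Q : R[X]) :
    Prop where
  degree_num_le : P.degree ≤ m
  degree_denom_le : Q.degree ≤ n
  X_pow_dvd : (PowerSeries.X : R⟦X⟧) ^ (m + n + 1) ∣ Q * F - P

theorem isPadeSolution_iff_isPadeApproximant {F : ℂ⟦X⟧} {n : ℕ} {P Q : ℂ[X]} :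
    IsPadeSolution F n P Q ↔ IsPadeApproximant F n n P Q := by
  rw [IsPadeSolution, two_mul]
  exact ⟨fun ⟨hP, hQ, hdvd⟩ ↦ ⟨hP, hQ, hdvd⟩, fun ⟨hP, hQ, hdvd⟩ ↦ ⟨hP, hQ, hdvd⟩⟩

namespace IsPadeApproximant

section CommRing

variable {R : Type*} [CommRing R] {F : R⟦X⟧} {m n : ℕ} {P Q P' Q' : R[X]}

theorem of_coeff_eq_zero (hQ : Q.degree ≤ n)
    (hcoeff : ∀ i < n, PowerSeries.coeff (m + 1 + i) (Q * F : R⟦X⟧) = 0) :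
    IsPadeApproximant F m n (PowerSeries.trunc (m + 1) (Q * F : R⟦X⟧)) Q where
  degree_num_le :=
    degree_le_of_natDegree_le (Nat.lt_succ_iff.mp (PowerSeries.natDegree_trunc_lt _ m))
  degree_denom_le := hQ
  X_pow_dvd := by
    rw [PowerSeries.X_pow_dvd_iff]
    intro k hk
    rw [map_sub, coeff_coe, PowerSeries.coeff_trunc]
    split_ifs with hkm
    · exact sub_self _
    · obtain ⟨i, rfl⟩ := Nat.exists_eq_add_of_le (not_lt.mp hkm)
      rw [hcoeff i (by lia), sub_zero]

theorem exists_denom_ne_zero [Nontrivial R] (F : R⟦X⟧) (m n : ℕ) :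
    ∃ P Q : R[X], IsPadeApproximant F m n P Q ∧ Q ≠ 0 := by
  let highCoeffs : degreeLT R (n + 1) →ₗ[R] Fin n → R :=
    LinearMap.pi fun i ↦ PowerSeries.coeff (m + 1 + i) ∘ₗ LinearMap.mulRight R F ∘ₗ
      (coeToPowerSeries.algHom R).toLinearMap ∘ₗ (degreeLT R (n + 1)).subtype
  have hfinrank : Module.finrank R (Fin n → R) < Module.finrank R (degreeLT R (n + 1)) := by
    simp [Module.finrank_eq_card_basis (degreeLT.basis R (n + 1))]
  have hninj : ¬ Function.Injective highCoeffs := fun hinj ↦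
    (LinearMap.finrank_le_finrank_of_injective hinj).not_gt hfinrank
  simp only [injective_iff_map_eq_zero, not_forall] at hninj
  obtain ⟨⟨Q, hQmem⟩, hQker, hQ⟩ := hninj
  rw [degreeLT_succ_eq_degreeLE, mem_degreeLE] at hQmem
  have hcoeff (i : ℕ) (hi : i < n) : PowerSeries.coeff (m + 1 + i) (Q * F : R⟦X⟧) = 0 := by
    simpa [highCoeffs] using congrFun hQker ⟨i, hi⟩
  exact ⟨_, Q, of_coeff_eq_zero hQmem hcoeff, fun h ↦ hQ (Subtype.ext h)⟩

theorem num_mul_denom_eq (h : IsPadeApproximant F m n P Q) (h' : IsPadeApproximant F m n P' Q') :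
    P * Q' = P' * Q := by
  have hdvd : (PowerSeries.X : R⟦X⟧) ^ (m + n + 1) ∣ (P * Q' - P' * Q : R[X]) := by
    convert dvd_sub (h'.X_pow_dvd.mul_left Q) (h.X_pow_dvd.mul_left Q') using 1
    push_cast
    ring
  have hdeg : (P * Q' - P' * Q).degree ≤ (m + n : ℕ) := by
    rw [Nat.cast_add, ← max_self (m + n : WithBot ℕ)]
    exact degree_sub_le_of_le (degree_mul_le_of_le h.degree_num_le h'.degree_denom_le)
      (degree_mul_le_of_le h'.degree_num_le h.degree_denom_le)
  exact sub_eq_zero.mp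
    (eq_zero_of_X_pow_dvd_coe hdvd (Nat.lt_succ_of_le (natDegree_le_of_degree_le hdeg)))

end CommRing

section Field

variable {K : Type*} [Field K] {F : K⟦X⟧} {m n : ℕ} {P Q P₀ Q₀ : K[X]}

theorem sub_div_mul_mod (h : IsPadeApproximant F m n P Q) (h₀ : IsPadeApproximant F m n P₀ Q₀)
    (hQ₀ : Q₀ ≠ 0) : IsPadeApproximant F m n (P - Q / Q₀ * P₀) (Q % Q₀) where
  degree_num_le := by
    have hcross : (P - Q / Q₀ * P₀) * Q₀ = P₀ * (Q % Q₀) := by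
      rw [EuclideanDomain.mod_eq_sub_mul_div]
      linear_combination h.num_mul_denom_eq h₀
    have hdeg : (P - Q / Q₀ * P₀).degree + Q₀.degree ≤ P₀.degree + Q₀.degree := by
      rw [← degree_mul, hcross, degree_mul]
      gcongr
      exact (degree_mod_lt Q hQ₀).le
    exact (WithBot.le_of_add_le_add_right (degree_ne_bot.mpr hQ₀) hdeg).trans h₀.degree_num_le
  degree_denom_le := (degree_mod_lt Q hQ₀).le.trans h₀.degree_denom_le
  X_pow_dvd := by
    rw [EuclideanDomain.mod_eq_sub_mul_div]
    convert dvd_sub h.X_pow_dvd (h₀.X_pow_dvd.mul_left (Q / Q₀ : K[X])) using 1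
    push_cast
    ring

theorem eq_div_mul_of_degree_minimal (h : IsPadeApproximant F m n P Q)
    (h₀ : IsPadeApproximant F m n P₀ Q₀) (hQ₀ : Q₀ ≠ 0)
    (hmin : ∀ P' Q' : K[X], IsPadeApproximant F m n P' Q' → Q' ≠ 0 → Q₀.degree ≤ Q'.degree) :
    P = Q / Q₀ * P₀ ∧ Q = Q / Q₀ * Q₀ := by
  have hrem := h.sub_div_mul_mod h₀ hQ₀
  have hmod : Q % Q₀ = 0 := by
    by_contra hne
    exact (hmin _ _ hrem hne).not_gt (degree_mod_lt Q hQ₀)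
  have hnum : (P - Q / Q₀ * P₀) * Q₀ = 0 := by
    rw [hrem.num_mul_denom_eq h₀, hmod, mul_zero]
  exact ⟨sub_eq_zero.mp ((mul_eq_zero.mp hnum).resolve_right hQ₀),
    by rw [mul_comm, EuclideanDomain.mul_div_cancel' hQ₀ (EuclideanDomain.mod_eq_zero.mp hmod)]⟩

end Field

end IsPadeApproximant

theorem pade_minimal_solution_general {K : Type*} [Field K] (F : K⟦X⟧) (m n : ℕ) :
    ∃ P₀ Q₀ : K[X], IsPadeApproximant F m n P₀ Q₀ ∧ Q₀ ≠ 0 ∧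
      ∀ P Q : K[X], IsPadeApproximant F m n P Q → ∃ L : K[X], P = L * P₀ ∧ Q = L * Q₀ := by
  obtain ⟨P₁, Q₁, h₁, hQ₁⟩ := IsPadeApproximant.exists_denom_ne_zero F m n
  obtain ⟨⟨P₀, Q₀⟩, ⟨h₀, hQ₀⟩, hmin⟩ := exists_minimalFor_of_wellFoundedLT
    (fun PQ : K[X] × K[X] ↦ IsPadeApproximant F m n PQ.1 PQ.2 ∧ PQ.2 ≠ 0)
    (fun PQ ↦ PQ.2.degree) ⟨(P₁, Q₁), h₁, hQ₁⟩
  refine ⟨P₀, Q₀, h₀, hQ₀, fun P Q h ↦ ⟨Q / Q₀, h.eq_div_mul_of_degree_minimal h₀ hQ₀ ?_⟩⟩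
  intro P' Q' h' hQ'
  exact (le_total _ _).elim id (hmin (j := (P', Q')) ⟨h', hQ'⟩)

end PadeApproximants

/-- There is a minimal-degree `(n,n)` Padé solution `(P₀, Q₀)` with `Q₀ ≠ 0`
such that every `(n,n)` Padé solution is a polynomial multiple of it. -/
theorem pade_minimal_solution (F : PowerSeries ℂ) (n : ℕ) :
    ∃ P₀ Q₀ : Polynomial ℂ, IsPadeSolution F n P₀ Q₀ ∧ Q₀ ≠ 0 ∧
      ∀ P Q : Polynomial ℂ, IsPadeSolution F n P Q →
        ∃ L : Polynomial ℂ, P = L * P₀ ∧ Q = L * Q₀ := by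
  simpa only [isPadeSolution_iff_isPadeApproximant] using pade_minimal_solution_general F n n
end

section
/- Let p, q be polynomials over ℂ with deg q ≤ n, and suppose there exist constants C > 0 and R ≥ R₀ such that |q(z)f(z) − p(z)| ≤ C·|z|^{−(n+1)} for all z ∈ ℂ with |z| ≥ R. Then the denominator q satisfies the non-Hermitian orthogonality relations ∫ t^k · q(t) · h(t) dμ(t) = 0 for every integer k with 0 ≤ k ≤ n − 1. -/
open MeasureTheory Polynomial

/-!
For a polynomial `Q` and `z` outside the support, splitting `Q z = Q t - (Q t - Q z)` under the
integral gives `Q z * ∫ a t / (t - z) = ∫ Q t * a t / (t - z) - S z`, where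
`S z = ∫ (Q t - Q z) / (t - z) * a t` is a polynomial in `z`. Take `a = h` and `Q = X ^ n * q`.
The Padé condition says `z ^ n * (q z * f z - p z) → 0`, and Cauchy transforms vanish at infinity,
so the polynomial `S + X ^ n * p` tends to `0` at infinity and is therefore zero. The coefficient
of `X ^ (n - 1 - k)` in `S` is `∫ t ^ k * q t * h t`, while `X ^ n * p` has no term of degree
below `n`.
-/

section DivX

variable {R : Type*}

theorem coeff_iterate_divX [Semiring R] (Q : R[X]) (m i : ℕ) :
    (divX^[m] Q).coeff i = Q.coeff (i + m) := by
  induction m generalizing i with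
  | zero => rfl
  | succ m ih => rw [Function.iterate_succ_apply', coeff_divX, ih, add_right_comm, add_assoc]

theorem iterate_divX_eq_zero [Semiring R] {Q : R[X]} {m : ℕ} (hm : Q.natDegree < m) :
    divX^[m] Q = 0 := by
  ext i
  rw [coeff_iterate_divX, coeff_zero, coeff_eq_zero_of_natDegree_lt (by lia)]

theorem iterate_divX_X_pow_mul [Semiring R] (Q : R[X]) (m k : ℕ) :
    divX^[m] (X ^ (k + m) * Q) = X ^ k * Q := by
  ext i
  simp only [coeff_iterate_divX, coeff_X_pow_mul', add_le_add_iff_right, Nat.add_sub_add_right]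

theorem eval_iterate_divX [CommSemiring R] (Q : R[X]) (m : ℕ) (t : R) :
    (divX^[m] Q).eval t = t * (divX^[m + 1] Q).eval t + Q.coeff m := by
  have h := congrArg (eval t) (X_mul_divX_add (divX^[m] Q))
  rw [eval_add, eval_mul, eval_X, eval_C, coeff_iterate_divX, zero_add] at h
  rw [Function.iterate_succ_apply', h]

theorem eval_sub_eval_eq_sub_mul_sum_iterate_divX [CommRing R] (Q : R[X]) (t z : R) :
    Q.eval t - Q.eval z =
      (t - z) * ∑ j ∈ Finset.range (Q.natDegree + 1), (divX^[j + 1] Q).eval t * z ^ j := by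
  have telescope : ∀ j, (t - z) * ((divX^[j + 1] Q).eval t * z ^ j) =
      (divX^[j] Q).eval t * z ^ j - (divX^[j + 1] Q).eval t * z ^ (j + 1) -
        Q.coeff j * z ^ j := fun j => by
    rw [eval_iterate_divX Q j]
    ring
  rw [Finset.mul_sum, Finset.sum_congr rfl fun j _ => telescope j, Finset.sum_sub_distrib,
    Finset.sum_range_sub' fun j => (divX^[j] Q).eval t * z ^ j, ← eval_eq_sum_range,
    iterate_divX_eq_zero Q.natDegree.lt_succ_self]
  simp

end DivX

section Cobounded

open Filter Bornology Asymptotics Topology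

theorem eq_zero_of_tendsto_eval_cobounded {𝕜 : Type*} [NontriviallyNormedField 𝕜] {P : 𝕜[X]}
    (hP : Tendsto P.eval (cobounded 𝕜) (𝓝 0)) : P = 0 := by
  by_contra hP0
  have one_isBigO : (1 : 𝕜[X]).eval =O[cobounded 𝕜] P.eval :=
    isBigO_cobounded_of_degree_le (by simpa using zero_le_degree_iff.2 hP0)
  have one_isLittleO : (fun _ : 𝕜 => (1 : 𝕜)) =o[cobounded 𝕜] fun _ => (1 : 𝕜) := by
    simpa using one_isBigO.trans_isLittleO ((isLittleO_one_iff 𝕜).2 hP)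
  exact isLittleO_irrefl (.of_forall fun _ => one_ne_zero) one_isLittleO

theorem isLittleO_inv_pow_of_norm_le_div {𝕜 E : Type*} [NormedField 𝕜] [NormedAddCommGroup E]
    {g : 𝕜 → E} {n : ℕ} {C R : ℝ} (hg : ∀ z, R ≤ ‖z‖ → ‖g z‖ ≤ C / ‖z‖ ^ (n + 1)) :
    g =o[cobounded 𝕜] fun z => (z ^ n)⁻¹ := by
  have hgO : g =O[cobounded 𝕜] fun z => (z ^ (n + 1))⁻¹ := by
    refine .of_bound C ?_
    filter_upwards [eventually_cobounded_le_norm R] with z hz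
    simpa [div_eq_mul_inv] using hg z hz
  refine hgO.trans_isLittleO ((isLittleO_pow_pow_cobounded_of_lt n.lt_succ_self).inv_rev ?_)
  filter_upwards [eventually_ne_cobounded 0] with z hz h0
  exact absurd h0 (pow_ne_zero n hz)

end Cobounded

theorem norm_inv_sub_le {𝕜 : Type*} [NormedDivisionRing 𝕜] {R₀ : ℝ} {z t : 𝕜} (hz : R₀ < ‖z‖)
    (ht : ‖t‖ ≤ R₀) : ‖(t - z)⁻¹‖ ≤ (‖z‖ - R₀)⁻¹ := by
  rw [norm_inv, norm_sub_rev]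
  exact inv_anti₀ (sub_pos.2 hz) ((sub_le_sub_left ht _).trans (norm_sub_norm_le z t))

section CauchyTransform

open Filter Bornology Asymptotics Topology

variable {𝕜 : Type*} [RCLike 𝕜]

/-- The Cauchy transform `z ↦ ∫ a(t) / (t - z) dμ(t)` of the complex or signed measure `a dμ`. Its
value is meaningful only where the integrand is integrable, in particular for `z` at positive
distance from the support of `μ` when `a` is integrable. -/
noncomputable def cauchyTransform (μ : Measure 𝕜) (a : 𝕜 → 𝕜) (z : 𝕜) : 𝕜 :=
  ∫ t, a t / (t - z) ∂μ

/-- The polynomial of the second kind `z ↦ ∫ (Q(t) - Q(z)) / (t - z) * a(t) dμ(t)` associated with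
`Q` and `a dμ`, which is the polynomial part of `-Q` times the Cauchy transform of `a dμ`. It is
given by its coefficients, using `(Q(t) - Q(z)) / (t - z) = ∑ j, (divX^[j + 1] Q)(t) * z ^ j`. -/
noncomputable def secondKindPolynomial (μ : Measure 𝕜) (a : 𝕜 → 𝕜) (Q : 𝕜[X]) : 𝕜[X] :=
  ∑ j ∈ Finset.range (Q.natDegree + 1), monomial j (∫ t, (divX^[j + 1] Q).eval t * a t ∂μ)

theorem coeff_secondKindPolynomial (μ : Measure 𝕜) (a : 𝕜 → 𝕜) (Q : 𝕜[X]) (j : ℕ) :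
    (secondKindPolynomial μ a Q).coeff j = ∫ t, (divX^[j + 1] Q).eval t * a t ∂μ := by
  simp only [secondKindPolynomial, finsetSum_coeff, coeff_monomial, Finset.sum_ite_eq',
    Finset.mem_range]
  split_ifs with hj
  · rfl
  · simp [iterate_divX_eq_zero (show Q.natDegree < j + 1 by lia)]

variable {μ : Measure 𝕜} {R₀ : ℝ} {a : 𝕜 → 𝕜} {z : 𝕜}

theorem integrable_eval_mul (hμ : ∀ᵐ t ∂μ, ‖t‖ ≤ R₀) (ha : Integrable a μ) (Q : 𝕜[X]) :
    Integrable (fun t => Q.eval t * a t) μ := by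
  obtain ⟨c, hc⟩ := (isCompact_closedBall (0 : 𝕜) R₀).exists_bound_of_continuousOn
    Q.continuous.continuousOn
  refine ha.bdd_mul (c := c) Q.continuous.aestronglyMeasurable ?_
  filter_upwards [hμ] with t ht
  exact hc t (mem_closedBall_zero_iff.2 ht)

theorem integrable_div_sub (hμ : ∀ᵐ t ∂μ, ‖t‖ ≤ R₀) (ha : Integrable a μ) (hz : R₀ < ‖z‖) :
    Integrable (fun t => a t / (t - z)) μ := by
  simp only [div_eq_inv_mul]
  refine ha.bdd_mul (c := (‖z‖ - R₀)⁻¹) (by fun_prop) ?_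
  filter_upwards [hμ] with t ht using norm_inv_sub_le hz ht

theorem norm_cauchyTransform_le (hμ : ∀ᵐ t ∂μ, ‖t‖ ≤ R₀) (ha : Integrable a μ)
    (hz : R₀ < ‖z‖) : ‖cauchyTransform μ a z‖ ≤ (‖z‖ - R₀)⁻¹ * ∫ t, ‖a t‖ ∂μ := by
  rw [← integral_const_mul]
  refine norm_integral_le_of_norm_le (ha.norm.const_mul _) ?_
  filter_upwards [hμ] with t ht
  rw [div_eq_inv_mul, norm_mul]
  gcongr
  exact norm_inv_sub_le hz ht

theorem tendsto_cauchyTransform_cobounded (hμ : ∀ᵐ t ∂μ, ‖t‖ ≤ R₀) (ha : Integrable a μ) :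
    Tendsto (cauchyTransform μ a) (cobounded 𝕜) (𝓝 0) := by
  have norm_atTop : Tendsto (fun z : 𝕜 => ‖z‖) (cobounded 𝕜) atTop :=
    tendsto_norm_cobounded_atTop
  have bound_tendsto : Tendsto (fun z : 𝕜 => (‖z‖ - R₀)⁻¹ * ∫ t, ‖a t‖ ∂μ)
      (cobounded 𝕜) (𝓝 0) := by
    simpa [sub_eq_add_neg] using
      (tendsto_atTop_add_const_right _ (-R₀) norm_atTop).inv_tendsto_atTop.mul_const
        (∫ t, ‖a t‖ ∂μ)
  refine squeeze_zero_norm' ?_ bound_tendsto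
  filter_upwards [norm_atTop.eventually_gt_atTop R₀] with z hz
  exact norm_cauchyTransform_le hμ ha hz

theorem eval_secondKindPolynomial (hμ : ∀ᵐ t ∂μ, ‖t‖ ≤ R₀) (ha : Integrable a μ)
    (hz : R₀ < ‖z‖) (Q : 𝕜[X]) :
    (secondKindPolynomial μ a Q).eval z = ∫ t, (Q.eval t - Q.eval z) / (t - z) * a t ∂μ := by
  simp only [secondKindPolynomial, eval_finsetSum, eval_monomial, ← integral_mul_const]
  rw [← integral_finsetSum _ fun j _ => (integrable_eval_mul hμ ha _).mul_const _]
  refine integral_congr_ae ?_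
  filter_upwards [hμ] with t ht
  have htz : t - z ≠ 0 := sub_ne_zero.2 fun h => (h ▸ ht).not_gt hz
  rw [eval_sub_eval_eq_sub_mul_sum_iterate_divX, mul_div_cancel_left₀ _ htz, Finset.sum_mul]
  simp only [mul_right_comm]

theorem eval_mul_cauchyTransform (hμ : ∀ᵐ t ∂μ, ‖t‖ ≤ R₀) (ha : Integrable a μ)
    (hz : R₀ < ‖z‖) (Q : 𝕜[X]) :
    Q.eval z * cauchyTransform μ a z =
      cauchyTransform μ (fun t => Q.eval t * a t) z - (secondKindPolynomial μ a Q).eval z := by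
  have integrable_Qa := integrable_div_sub hμ (integrable_eval_mul hμ ha Q) hz
  have integrable_a := (integrable_div_sub hμ ha hz).const_mul (Q.eval z)
  have hS : (secondKindPolynomial μ a Q).eval z =
      cauchyTransform μ (fun t => Q.eval t * a t) z - Q.eval z * cauchyTransform μ a z := by
    rw [eval_secondKindPolynomial hμ ha hz, cauchyTransform, cauchyTransform,
      ← integral_const_mul, ← integral_sub integrable_Qa integrable_a]
    congr with t
    ring
  rw [hS, sub_sub_cancel]

theorem secondKindPolynomial_X_pow_mul_add_eq_zero (hμ : ∀ᵐ t ∂μ, ‖t‖ ≤ R₀)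
    (ha : Integrable a μ) {n : ℕ} {p q : 𝕜[X]}
    (herr : (fun z => q.eval z * cauchyTransform μ a z - p.eval z)
      =o[cobounded 𝕜] fun z => (z ^ n)⁻¹) :
    secondKindPolynomial μ a (X ^ n * q) + X ^ n * p = 0 := by
  refine eq_zero_of_tendsto_eval_cobounded ?_
  have error_tendsto := herr.tendsto_div_nhds_zero
  have transform_tendsto :=
    tendsto_cauchyTransform_cobounded hμ (integrable_eval_mul hμ ha (X ^ n * q))
  refine (sub_zero (0 : 𝕜) ▸ transform_tendsto.sub error_tendsto).congr' ?_
  filter_upwards [tendsto_norm_cobounded_atTop.eventually_gt_atTop R₀] with z hz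
  have expansion := eval_mul_cauchyTransform hμ ha hz (X ^ n * q)
  simp only [eval_add, eval_mul, eval_pow, eval_X, div_inv_eq_mul] at expansion ⊢
  linear_combination -expansion

theorem pade_denominator_orthogonality_general (hμ : ∀ᵐ t ∂μ, ‖t‖ ≤ R₀) {h : 𝕜 → 𝕜}
    (hh : Integrable h μ) {n : ℕ} {p q : 𝕜[X]}
    (herr : (fun z => q.eval z * cauchyTransform μ h z - p.eval z)
      =o[cobounded 𝕜] fun z => (z ^ n)⁻¹) {k : ℕ} (hk : k < n) :
    ∫ t, t ^ k * q.eval t * h t ∂μ = 0 := by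
  obtain ⟨j, rfl⟩ : ∃ j, n = k + (j + 1) := Nat.exists_eq_add_of_lt hk
  have hcoeff := congrArg (coeff · j) (secondKindPolynomial_X_pow_mul_add_eq_zero hμ hh herr)
  have hp : (X ^ (k + (j + 1)) * p).coeff j = 0 := by
    rw [coeff_X_pow_mul', if_neg (by lia)]
  simpa only [coeff_add, coeff_secondKindPolynomial, hp, iterate_divX_X_pow_mul, eval_mul,
    eval_pow, eval_X, add_zero, coeff_zero] using hcoeff

end CauchyTransform

/-- If `(p, q)` satisfies the Padé interpolation bound
`‖q(z)f(z) − p(z)‖ ≤ C·‖z‖^{−(n+1)}` for all large `z`, where `f` is the Cauchy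
transform of `h dμ`, then `q` satisfies the non-Hermitian orthogonality relations
`∫ tᵏ q(t) h(t) dμ(t) = 0` for `0 ≤ k ≤ n − 1`. -/
theorem pade_denominator_orthogonality
    (R₀ : ℝ) (hR₀ : 0 < R₀) (μ : Measure ℂ) [IsFiniteMeasure μ]
    (hμsupp : μ (Metric.closedBall 0 R₀)ᶜ = 0)
    (h : ℂ → ℂ) (hmeas : Measurable h) (M : ℝ) (hbdd : ∀ t : ℂ, ‖h t‖ ≤ M)
    (f : ℂ → ℂ) (hf : ∀ z : ℂ, f z = ∫ t, h t / (t - z) ∂μ)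
    (n : ℕ) (p q : Polynomial ℂ) (hq : q.degree ≤ (n : ℕ))
    (C R : ℝ) (hC : 0 < C) (hR : R₀ ≤ R)
    (herr : ∀ z : ℂ, R ≤ ‖z‖ → ‖q.eval z * f z - p.eval z‖ ≤ C / ‖z‖ ^ (n + 1)) :
    ∀ k : ℕ, k < n → ∫ t, t ^ k * q.eval t * h t ∂μ = 0 := by
  have hμ : ∀ᵐ t ∂μ, ‖t‖ ≤ R₀ := by
    filter_upwards [compl_mem_ae_iff.2 hμsupp] with t ht
    simpa using ht
  have hh : Integrable h μ := .of_bound hmeas.aestronglyMeasurable M (.of_forall hbdd)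
  obtain rfl : f = cauchyTransform μ h := funext hf
  intro k hk
  exact pade_denominator_orthogonality_general hμ hh (isLittleO_inv_pow_of_norm_le_div herr) hk
end

section
/- Let q be a polynomial over ℂ with deg q ≤ n satisfying the orthogonality relations ∫ t^k · q(t) · h(t) dμ(t) = 0 for every integer k with 0 ≤ k ≤ n − 1. Then for every z ∈ ℂ not in the support of μ one has the reproducing identity q(z) · ∫ q(t)·h(t)/(t − z) dμ(t) = ∫ q(t)²·h(t)/(t − z) dμ(t). -/
open MeasureTheory Polynomial

/-- The (closed) support of a Borel measure on `ℂ`: points all of whose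
neighborhoods have positive measure. -/
def measureSupport (μ : Measure ℂ) : Set ℂ :=
  {z : ℂ | ∀ ε : ℝ, 0 < ε → 0 < μ (Metric.ball z ε)}

/-!
Divide `q` by `X - z`: `q(t) = q(z) + (t - z) p(t)` with `deg p < n`. Multiplying by
`q(t) h(t) / (t - z)` and integrating, the only term besides the two sides of the identity is
`∫ p q h dμ`, which vanishes by orthogonality.
-/

section Division

variable {R : Type*} [CommRing R]

lemma eval_eq_eval_add_sub_mul_eval_divByMonic (q : R[X]) (z t : R) :
    q.eval t = q.eval z + (t - z) * (q /ₘ (X - C z)).eval t := by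
  have hdiv := congrArg (eval t) (modByMonic_add_div q (X - C z))
  simpa [modByMonic_X_sub_C_eq_C_eval] using hdiv.symm

lemma degree_divByMonic_X_sub_C_lt {n : ℕ} {q : R[X]} (hq : q.degree ≤ n) (z : R) :
    (q /ₘ (X - C z)).degree < n := by
  rcases eq_or_ne q 0 with rfl | hq0
  · simp
  · have : Nontrivial R := .of_polynomial_ne hq0
    exact (degree_divByMonic_lt q (X - C z) hq0 (by simp)).trans_le hq

end Division

lemma eval_mul_eq_sum_coeff_mul_pow_mul {R : Type*} [Semiring R] {n : ℕ} {p : R[X]}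
    (hp : p.degree < n) (x y : R) :
    p.eval x * y = ∑ k : Fin n, p.coeff k * (x ^ (k : ℕ) * y) := by
  simp only [eval_eq_sum, ← mul_assoc, ← Finset.sum_mul]
  rw [sum_fin (fun k a => a * x ^ k) (by simp) hp]

section Moments

variable {𝕜 : Type*} [RCLike 𝕜] [MeasurableSpace 𝕜] {μ : Measure 𝕜} {n : ℕ} {p : 𝕜[X]} {g : 𝕜 → 𝕜}

lemma integrable_eval_mul_of_degree_lt (hp : p.degree < n)
    (hint : ∀ k < n, Integrable (fun t => t ^ k * g t) μ) :
    Integrable (fun t => p.eval t * g t) μ := by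
  simp only [eval_mul_eq_sum_coeff_mul_pow_mul hp]
  exact integrable_finsetSum _ fun k _ => (hint k k.isLt).const_mul _

lemma integral_eval_mul_eq_zero_of_degree_lt (hp : p.degree < n)
    (hint : ∀ k < n, Integrable (fun t => t ^ k * g t) μ)
    (horth : ∀ k < n, ∫ t, t ^ k * g t ∂μ = 0) :
    ∫ t, p.eval t * g t ∂μ = 0 := by
  simp only [eval_mul_eq_sum_coeff_mul_pow_mul hp]
  rw [integral_finsetSum _ fun (k : Fin n) _ => (hint k k.isLt).const_mul _]
  exact Finset.sum_eq_zero fun k _ => by rw [integral_const_mul, horth k k.isLt, mul_zero]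

end Moments

section Integrability

lemma integrable_continuous_mul_of_isCompact {X R : Type*} [TopologicalSpace X] [T2Space X]
    [MeasurableSpace X] [OpensMeasurableSpace X] [NormedRing R] [SecondCountableTopologyEither X R]
    {μ : Measure X} {K : Set X} (hK : IsCompact K) (hμK : μ Kᶜ = 0) {f g : X → R}
    (hf : Continuous f) (hg : Integrable g μ) : Integrable (fun x => f x * g x) μ := by
  have hμ : μ.restrict K = μ := Measure.restrict_eq_self_of_ae_mem hμK
  simpa only [IntegrableOn, hμ] using hg.integrableOn.continuousOn_mul hf.continuousOn hK

lemma integrable_div_sub_of_measure_ball_eq_zero {𝕜 : Type*} [NormedField 𝕜]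
    [SecondCountableTopology 𝕜] [MeasurableSpace 𝕜] [BorelSpace 𝕜] {μ : Measure 𝕜} {z : 𝕜} {ε : ℝ}
    (hε : 0 < ε) (hball : μ (Metric.ball z ε) = 0) {g : 𝕜 → 𝕜} (hg : Integrable g μ) :
    Integrable (fun t => g t / (t - z)) μ := by
  simp only [div_eq_mul_inv]
  refine hg.mul_bdd (c := ε⁻¹) (by fun_prop) ?_
  filter_upwards [measure_eq_zero_iff_ae_notMem.1 hball] with t ht
  have hdist : ε ≤ ‖t - z‖ := by simpa [dist_eq_norm] using ht
  rw [norm_inv]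
  exact inv_anti₀ hε hdist

end Integrability

section Support

variable {μ : Measure ℂ} {z : ℂ}

lemma exists_measure_ball_eq_zero_of_notMem_measureSupport (hz : z ∉ measureSupport μ) :
    ∃ ε > 0, μ (Metric.ball z ε) = 0 := by
  simpa [measureSupport] using hz

lemma measure_singleton_eq_zero_of_notMem_measureSupport (hz : z ∉ measureSupport μ) :
    μ {z} = 0 := by
  obtain ⟨ε, hε, hball⟩ := exists_measure_ball_eq_zero_of_notMem_measureSupport hz
  exact measure_mono_null (by simpa using hε) hball

lemma integrable_div_sub_of_notMem_measureSupport (hz : z ∉ measureSupport μ) {g : ℂ → ℂ}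
    (hg : Integrable g μ) : Integrable (fun t => g t / (t - z)) μ := by
  obtain ⟨ε, hε, hball⟩ := exists_measure_ball_eq_zero_of_notMem_measureSupport hz
  exact integrable_div_sub_of_measure_ball_eq_zero hε hball hg

end Support

theorem orthogonality_reproducing_identity_general {𝕜 : Type*} [RCLike 𝕜] [MeasurableSpace 𝕜]
    {μ : Measure 𝕜} {h : 𝕜 → 𝕜} {n : ℕ} {q : 𝕜[X]} {z : 𝕜} (hq : q.degree ≤ n)
    (hint : ∀ k < n, Integrable (fun t => t ^ k * q.eval t * h t) μ)
    (horth : ∀ k < n, ∫ t, t ^ k * q.eval t * h t ∂μ = 0)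
    (hz : μ {z} = 0) (hcauchy : Integrable (fun t => q.eval t * h t / (t - z)) μ) :
    q.eval z * ∫ t, q.eval t * h t / (t - z) ∂μ
      = ∫ t, q.eval t ^ 2 * h t / (t - z) ∂μ := by
  simp only [mul_assoc] at hint horth
  set p := q /ₘ (X - C z)
  have hp : p.degree < n := degree_divByMonic_X_sub_C_lt hq z
  have hpq : Integrable (fun t => p.eval t * (q.eval t * h t)) μ :=
    integrable_eval_mul_of_degree_lt hp hint
  have hdecomp : ∀ᵐ t ∂μ, q.eval t ^ 2 * h t / (t - z)
      = q.eval z * (q.eval t * h t / (t - z)) + p.eval t * (q.eval t * h t) := by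
    filter_upwards [measure_eq_zero_iff_ae_notMem.1 hz] with t ht
    have htz : t - z ≠ 0 := sub_ne_zero.2 ht
    field_simp
    linear_combination q.eval t * h t * eval_eq_eval_add_sub_mul_eval_divByMonic q z t
  rw [integral_congr_ae hdecomp, integral_add (hcauchy.const_mul _) hpq, integral_const_mul,
    integral_eval_mul_eq_zero_of_degree_lt hp hint horth, add_zero]

/-- If `q` has degree at most `n` and satisfies the non-Hermitian orthogonality
relations `∫ tᵏ q(t) h(t) dμ(t) = 0` for `0 ≤ k ≤ n − 1`, then for every `z`
outside the support of `μ` the reproducing identity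
`q(z)·∫ q(t)h(t)/(t − z) dμ(t) = ∫ q(t)² h(t)/(t − z) dμ(t)` holds. -/
theorem orthogonality_reproducing_identity
    (R₀ : ℝ) (hR₀ : 0 < R₀) (μ : Measure ℂ) [IsFiniteMeasure μ]
    (hμsupp : μ (Metric.closedBall 0 R₀)ᶜ = 0)
    (h : ℂ → ℂ) (hmeas : Measurable h) (M : ℝ) (hbdd : ∀ t : ℂ, ‖h t‖ ≤ M)
    (n : ℕ) (q : Polynomial ℂ) (hq : q.degree ≤ (n : ℕ))
    (horth : ∀ k : ℕ, k < n → ∫ t, t ^ k * q.eval t * h t ∂μ = 0) :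
    ∀ z : ℂ, z ∉ measureSupport μ →
      q.eval z * ∫ t, q.eval t * h t / (t - z) ∂μ
        = ∫ t, (q.eval t) ^ 2 * h t / (t - z) ∂μ := by
  intro z hz
  have hint {g : ℂ → ℂ} (hg : Continuous g) : Integrable (fun t => g t * h t) μ :=
    integrable_continuous_mul_of_isCompact (isCompact_closedBall 0 R₀) hμsupp hg
      (.of_bound hmeas.aestronglyMeasurable M (.of_forall hbdd))
  exact orthogonality_reproducing_identity_general hq (fun k _ => hint (by fun_prop)) horth
    (measure_singleton_eq_zero_of_notMem_measureSupport hz)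
    (integrable_div_sub_of_notMem_measureSupport hz (hint q.continuous))
end
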